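/- For every N ∈ ℕ and every finite sequence d_1, …, d_n of digits from D = {0, ±1, ±ω, ±ω²} (ω = e^{2πi/3}) with exactly N nonzero terms, the product e A_{d_1} A_{d_2} ⋯ A_{d_n} eᵀ is at most s_N = ⌊(6·2^N + 1)/7⌋; moreover for every N there exists such a sequence with e A_{d_1} ⋯ A_{d_n} eᵀ = s_N. -/

import Mathlib

/-!
By symmetry under the rotation `R`, every column vector `A_{d_1} ⋯ A_{d_n} eᵀ` is, up to a power of
`Rᵀ`, of the form `(x, 0, 0, 0, a, b, c)ᵀ` with nonnegative entries. Multiplying by `A_d` with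
`d ≠ 0` then acts on `(x, a, b, c)` by one of six linear maps (`E1_mulVec`), according to the angle
between `d` and the current rotation, while `A_0` keeps `x` and kills `a, b, c`.

*Upper bound.* Write `P = 2 ^ N` and `s_N = sseq N`. The system of inequalities
`x ≤ s_N`, `x + b ≤ s_{N+1}`, `3x + a + b + c ≤ s_{N+2}`, `x + a ≤ P`, `x + c ≤ P`, `2x + b ≤ 2P`
is preserved (with `N` increased by one) by each of the six maps, see `Bounded.step`; what makes it
close up is the recurrence `s_{N+3} = 6 · 2 ^ N + s_N`, since for instance
`7x + 3b = 3(2x + b) + x ≤ 6P + s_N`.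

*Attainment.* The state `(s_N, P - s_N, 2(P - s_N), P - s_N)` is reached for every `N`: it is the
state for `N = 0`, one or two digits lead to it for `N = 1, 2`, and three suitable digits lead from
the state for `N` to the state for `N + 3`.
-/

open Matrix

noncomputable section

/-- The primitive cube root of unity `ω = exp(2πi/3)`. -/
def ω : ℂ := Complex.exp (2 * Real.pi * Complex.I / 3)

/-- The base `β = ω - 1`. -/
def eβ : ℂ := ω - 1

/-- The digit set `D = {0, ±1, ±ω, ±ω²}`. -/
def eD : Set ℂ := {0, 1, -1, ω, -ω, ω ^ 2, -ω ^ 2}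

/-- The ring of Eisenstein integers `ℤ[ω]`, as a subset of `ℂ`. -/
def EisZ : Set ℂ := {x | ∃ a b : ℤ, x = (a : ℂ) + (b : ℂ) * ω}

/-- Value of a digit string `d_{n-1} ⋯ d_0`, given as a list with the least
significant digit first: `eval [d_0, d_1, …, d_{n-1}] = Σ d_j β^j`. -/
def evalE (l : List ℂ) : ℂ :=
  l.foldr (fun d acc => d + eβ * acc) 0

/-- `l` (least significant digit first) is a `(β, D)`-representation of `x`. -/
def eIsRep (x : ℂ) (l : List ℂ) : Prop :=
  (∀ d ∈ l, d ∈ eD) ∧ evalE l = x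

/-- A representation is normalized if it is empty or its leading digit
(the last entry of the LSD-first list) is nonzero. -/
def eNormalized (l : List ℂ) : Prop := l.getLast? ≠ some 0

open scoped Classical in
/-- Number of nonzero digits (Hamming weight). -/
def eweight (l : List ℂ) : ℕ := (l.filter (fun d => d ≠ 0)).length

/-- The row vector `e = (1,0,0,0,0,0,0)`. -/
def e7 : Matrix (Fin 1) (Fin 7) ℤ := !![1,0,0,0,0,0,0]

/-- The permutation matrix `R` fixing coordinate 1 and cyclically permuting
coordinates 2,…,7. -/
def R7 : Matrix (Fin 7) (Fin 7) ℤ :=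
  !![1,0,0,0,0,0,0;
     0,0,1,0,0,0,0;
     0,0,0,1,0,0,0;
     0,0,0,0,1,0,0;
     0,0,0,0,0,1,0;
     0,0,0,0,0,0,1;
     0,1,0,0,0,0,0]

/-- The matrix `A_0`. -/
def E0 : Matrix (Fin 7) (Fin 7) ℤ :=
  !![1,0,0,0,0,0,0;
     0,0,0,0,0,0,0;
     0,0,0,0,0,0,0;
     0,0,0,0,0,0,0;
     0,0,0,0,0,0,0;
     0,0,0,0,0,0,0;
     0,0,0,0,0,0,0]

/-- The matrix `A_1`. -/
def E1 : Matrix (Fin 7) (Fin 7) ℤ :=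
  !![1,1,0,0,0,0,0;
     0,0,0,0,0,0,0;
     0,0,0,0,0,0,0;
     0,0,0,0,0,0,0;
     1,0,0,1,0,0,0;
     2,0,0,1,1,1,0;
     1,0,0,0,0,1,0]

/-- The matrix `A_{-1} = (Rᵀ)³ A_1 R³`. -/
def Em1 : Matrix (Fin 7) (Fin 7) ℤ := (R7ᵀ) ^ 3 * E1 * R7 ^ 3

open scoped Classical in
/-- The matrix `A_d` associated with a digit `d ∈ D`, where
`A_{λ^k} = (Rᵀ)^k A_1 R^k` for `λ = -ω²`. -/
def AmatE (d : ℂ) : Matrix (Fin 7) (Fin 7) ℤ :=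
  if d = 0 then E0
  else if d = 1 then E1
  else if d = -ω ^ 2 then (R7ᵀ) ^ 1 * E1 * R7 ^ 1
  else if d = ω then (R7ᵀ) ^ 2 * E1 * R7 ^ 2
  else if d = -1 then (R7ᵀ) ^ 3 * E1 * R7 ^ 3
  else if d = ω ^ 2 then (R7ᵀ) ^ 4 * E1 * R7 ^ 4
  else (R7ᵀ) ^ 5 * E1 * R7 ^ 5

/-- The sequence `s_N = ⌊(6·2^N + 1)/7⌋`. -/
def sseq (N : ℕ) : ℕ := (6 * 2 ^ N + 1) / 7

/-! ### The sequence `sseq` -/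

lemma sseq_add_three (N : ℕ) : sseq (N + 3) = 6 * 2 ^ N + sseq N := by
  unfold sseq; rw [pow_add]; omega

lemma sseq_le_two_pow (N : ℕ) : sseq N ≤ 2 ^ N := by
  have := Nat.one_le_two_pow (n := N)
  unfold sseq; omega

lemma two_pow_le_sseq_succ (N : ℕ) : 2 ^ N ≤ sseq (N + 1) := by
  have := Nat.one_le_two_pow (n := N)
  unfold sseq; rw [pow_succ]; omega

/-! ### The action of the matrices on states -/

/-- The column vector `(x, 0, 0, 0, a, b, c)ᵀ`, the normal form of a state up to rotation. -/
def stateVec (x a b c : ℤ) : Fin 7 → ℤ := ![x, 0, 0, 0, a, b, c]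

/-- The matrix `A_{λ^j}`, for an arbitrary exponent `j`. -/
def rotE1 (j : ℕ) : Matrix (Fin 7) (Fin 7) ℤ := R7ᵀ ^ j * E1 * R7 ^ j

lemma R7T_pow_six : R7ᵀ ^ 6 = 1 := by decide +kernel

lemma R7_eq : R7 = R7ᵀ ^ 5 := by decide +kernel

lemma R7T_pow_mod (n : ℕ) : R7ᵀ ^ n = R7ᵀ ^ (n % 6) :=
  pow_eq_pow_mod n R7T_pow_six

lemma R7T_mulVec (v : Fin 7 → ℤ) :
    R7ᵀ *ᵥ v = ![v 0, v 6, v 1, v 2, v 3, v 4, v 5] := by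
  ext i
  fin_cases i <;> simp [R7, Matrix.mulVec, dotProduct, Fin.sum_univ_succ, Matrix.transpose_apply]

lemma E1_mulVec_apply (v : Fin 7 → ℤ) :
    E1 *ᵥ v = stateVec (v 0 + v 1) (v 0 + v 3) (2 * v 0 + v 3 + v 4 + v 5) (v 0 + v 5) := by
  ext i
  fin_cases i <;> simp [E1, stateVec, Matrix.mulVec, dotProduct, Fin.sum_univ_succ]
  ring

lemma E0_mulVec (v : Fin 7 → ℤ) : E0 *ᵥ v = stateVec (v 0) 0 0 0 := by
  ext i
  fin_cases i <;> simp [E0, stateVec, Matrix.mulVec, dotProduct, Fin.sum_univ_succ]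

lemma R7T_pow_mulVec_zero (n : ℕ) (v : Fin 7 → ℤ) : (R7ᵀ ^ n *ᵥ v) 0 = v 0 := by
  induction n with
  | zero => simp
  | succ n ih => rw [pow_succ', ← Matrix.mulVec_mulVec, R7T_mulVec]; simpa using ih

/-- The six linear maps by which the nonzero digits act on states; the exponent of `R7ᵀ` is that of the
current rotation relative to the digit. -/
lemma E1_mulVec (x a b c : ℤ) :
    E1 *ᵥ (R7ᵀ ^ 0 *ᵥ stateVec x a b c) = stateVec x x (2 * x + a + b) (x + b) ∧
    E1 *ᵥ (R7ᵀ ^ 1 *ᵥ stateVec x a b c) = stateVec (x + c) x (2 * x + a) (x + a) ∧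
    E1 *ᵥ (R7ᵀ ^ 2 *ᵥ stateVec x a b c) = stateVec (x + b) x (2 * x) x ∧
    E1 *ᵥ (R7ᵀ ^ 3 *ᵥ stateVec x a b c) = stateVec (x + a) (x + c) (2 * x + c) x ∧
    E1 *ᵥ (R7ᵀ ^ 4 *ᵥ stateVec x a b c) = stateVec x (x + b) (2 * x + b + c) x ∧
    E1 *ᵥ (R7ᵀ ^ 5 *ᵥ stateVec x a b c) =
      stateVec x (x + a) (2 * x + a + b + c) (x + c) := by
  refine ⟨?_, ?_, ?_, ?_, ?_, ?_⟩ <;>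
  · rw [E1_mulVec_apply]
    simp [pow_succ', ← Matrix.mulVec_mulVec, R7T_mulVec, stateVec]

lemma rotE1_mulVec (i j : ℕ) (v : Fin 7 → ℤ) :
    rotE1 i *ᵥ (R7ᵀ ^ j *ᵥ v) = R7ᵀ ^ i *ᵥ (E1 *ᵥ (R7ᵀ ^ ((5 * i + j) % 6) *ᵥ v)) := by
  have h : R7 ^ i = R7ᵀ ^ (5 * i) := by
    conv_lhs => rw [R7_eq, ← pow_mul]
  rw [← R7T_pow_mod, rotE1, h]
  simp only [Matrix.mulVec_mulVec, pow_add, Matrix.mul_assoc]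

/-! ### Digits -/

lemma AmatE_of_ne_zero {d : ℂ} (hd : d ≠ 0) : ∃ i, AmatE d = rotE1 i := by
  unfold AmatE
  rw [if_neg hd]
  split_ifs
  · exact ⟨0, by simp [rotE1]⟩
  · exact ⟨1, rfl⟩
  · exact ⟨2, rfl⟩
  · exact ⟨3, rfl⟩
  · exact ⟨4, rfl⟩
  · exact ⟨5, rfl⟩

lemma omega_eq : ω = ⟨-1 / 2, √3 / 2⟩ := by
  have h : (2 * Real.pi * Complex.I / 3 : ℂ) = ((Real.pi - Real.pi / 3 : ℝ) : ℂ) * Complex.I := by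
    push_cast; ring
  rw [ω, h]
  apply Complex.ext
  · rw [Complex.exp_ofReal_mul_I_re, Real.cos_pi_sub, Real.cos_pi_div_three]; norm_num
  · rw [Complex.exp_ofReal_mul_I_im, Real.sin_pi_sub, Real.sin_pi_div_three]

lemma omega_sq_eq : ω ^ 2 = ⟨-1 / 2, -(√3 / 2)⟩ := by
  have h3 : √3 * √3 = 3 := Real.mul_self_sqrt (by norm_num)
  rw [omega_eq, sq]
  apply Complex.ext
  · simp only [Complex.mul_re]; linarith
  · simp only [Complex.mul_im]; ring

/-- Each of the six matrices `A_{λ^i}` comes from a nonzero digit; this is where the distinctness of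
the seven digits enters. -/
lemma exists_digit (i : ℕ) (hi : i < 6) : ∃ d ∈ eD, d ≠ 0 ∧ AmatE d = rotE1 i := by
  have h3 : 0 < √3 := by positivity
  have hp : -(√3 / 2) ≠ √3 / 2 := by linarith
  have hn : √3 / 2 ≠ -(√3 / 2) := by linarith
  unfold eD AmatE
  rw [omega_sq_eq, omega_eq]
  interval_cases i
  · exact ⟨1, by simp, by simp, by simp [rotE1]⟩
  · refine ⟨-⟨-1 / 2, -(√3 / 2)⟩, by simp, ?_, ?_⟩ <;>
    norm_num [Complex.ext_iff, rotE1, hp, hn]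
  · refine ⟨⟨-1 / 2, √3 / 2⟩, by simp, ?_, ?_⟩ <;>
    norm_num [Complex.ext_iff, rotE1, hp, hn]
  · refine ⟨-1, by simp, ?_, ?_⟩ <;>
    norm_num [Complex.ext_iff, rotE1, hp, hn]
  · refine ⟨⟨-1 / 2, -(√3 / 2)⟩, by simp, ?_, ?_⟩ <;>
    norm_num [Complex.ext_iff, rotE1, hp, hn]
  · refine ⟨-⟨-1 / 2, √3 / 2⟩, by simp, ?_, ?_⟩ <;>
    norm_num [Complex.ext_iff, rotE1, hp, hn]

lemma eweight_cons_zero (l : List ℂ) : eweight (0 :: l) = eweight l := by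
  simp [eweight]

lemma eweight_cons {d : ℂ} (hd : d ≠ 0) (l : List ℂ) : eweight (d :: l) = eweight l + 1 := by
  simp [eweight, hd]

/-- The column vector `A_{d_1} ⋯ A_{d_n} eᵀ`. -/
def colVec (l : List ℂ) : Fin 7 → ℤ := (l.map AmatE).prod *ᵥ stateVec 1 0 0 0

lemma colVec_nil : colVec [] = stateVec 1 0 0 0 := by simp [colVec]

lemma colVec_cons (d : ℂ) (l : List ℂ) : colVec (d :: l) = AmatE d *ᵥ colVec l := by
  simp [colVec]

lemma product_eq_colVec (l : List ℂ) :
    (e7 * (l.map AmatE).prod * e7ᵀ) 0 0 = colVec l 0 := by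
  simp [colVec, e7, stateVec, Matrix.mul_apply, Matrix.mulVec, Matrix.vecMul, dotProduct,
    Fin.sum_univ_succ]

/-! ### The upper bound -/

/-- The inequalities satisfied by a state `(x, a, b, c)` reached with `N` nonzero digits. -/
structure Bounded (N : ℕ) (x a b c : ℤ) : Prop where
  x_nonneg : 0 ≤ x
  a_nonneg : 0 ≤ a
  b_nonneg : 0 ≤ b
  c_nonneg : 0 ≤ c
  x_le : x ≤ (sseq N : ℤ)
  xb_le : x + b ≤ (sseq (N + 1) : ℤ)
  xabc_le : 3 * x + a + b + c ≤ (sseq (N + 2) : ℤ)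
  xa_le : x + a ≤ ((2 ^ N : ℕ) : ℤ)
  xc_le : x + c ≤ ((2 ^ N : ℕ) : ℤ)
  two_xb_le : 2 * x + b ≤ 2 * ((2 ^ N : ℕ) : ℤ)

lemma Bounded.step {N : ℕ} {x a b c : ℤ} (h : Bounded N x a b c) (m : ℕ) (hm : m < 6) :
    ∃ x' a' b' c', Bounded (N + 1) x' a' b' c' ∧
      E1 *ᵥ (R7ᵀ ^ m *ᵥ stateVec x a b c) = stateVec x' a' b' c' := by
  obtain ⟨h0, h1, h2, h3, h4, h5⟩ := E1_mulVec x a b c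
  obtain ⟨hx, ha, hb, hc, q1, q2, q3, q4, q5, q6⟩ := h
  have r1 := sseq_add_three N
  have r2 := sseq_le_two_pow N
  have r3 := two_pow_le_sseq_succ N
  have r4 : 2 ^ (N + 1) = 2 * 2 ^ N := pow_succ' 2 N
  interval_cases m
  · refine ⟨_, _, _, _, ?_, h0⟩
    constructor <;> simp only [add_assoc, Nat.reduceAdd, r1, r4] at * <;> omega
  · refine ⟨_, _, _, _, ?_, h1⟩
    constructor <;> simp only [add_assoc, Nat.reduceAdd, r1, r4] at * <;> omega
  · refine ⟨_, _, _, _, ?_, h2⟩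
    constructor <;> simp only [add_assoc, Nat.reduceAdd, r1, r4] at * <;> omega
  · refine ⟨_, _, _, _, ?_, h3⟩
    constructor <;> simp only [add_assoc, Nat.reduceAdd, r1, r4] at * <;> omega
  · refine ⟨_, _, _, _, ?_, h4⟩
    constructor <;> simp only [add_assoc, Nat.reduceAdd, r1, r4] at * <;> omega
  · refine ⟨_, _, _, _, ?_, h5⟩
    constructor <;> simp only [add_assoc, Nat.reduceAdd, r1, r4] at * <;> omega

lemma colVec_bounded (l : List ℂ) :
    ∃ j x a b c, Bounded (eweight l) x a b c ∧ colVec l = R7ᵀ ^ j *ᵥ stateVec x a b c := by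
  induction l with
  | nil =>
    refine ⟨0, 1, 0, 0, 0, ?_, by simp [colVec_nil]⟩
    constructor <;> norm_num [eweight, sseq]
  | cons d l ih =>
    obtain ⟨j, x, a, b, c, h, hl⟩ := ih
    rw [colVec_cons, hl]
    by_cases hd : d = 0
    · subst hd
      refine ⟨0, x, 0, 0, 0, ?_, ?_⟩
      · rw [eweight_cons_zero]
        obtain ⟨hx, ha, hb, hc, q1, q2, q3, q4, q5, q6⟩ := h
        constructor <;> omega
      · have hA : AmatE 0 = E0 := by simp [AmatE]
        rw [hA, E0_mulVec, R7T_pow_mulVec_zero]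
        simp [stateVec]
    · obtain ⟨i, hi⟩ := AmatE_of_ne_zero hd
      obtain ⟨x', a', b', c', h', hE⟩ :=
        h.step ((5 * i + j) % 6) (Nat.mod_lt _ (by norm_num))
      refine ⟨i, x', a', b', c', ?_, ?_⟩
      · rwa [eweight_cons hd]
      · rw [hi, rotE1_mulVec, hE]

/-! ### Attainment -/

/-- The state `(x, a, b, c)` is, up to rotation, the column vector of a digit sequence with exactly
`N` nonzero digits. -/
def Reachable (N : ℕ) (x a b c : ℤ) : Prop :=
  ∃ l : List ℂ, (∀ d ∈ l, d ∈ eD) ∧ eweight l = N ∧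
    ∃ j, colVec l = R7ᵀ ^ j *ᵥ stateVec x a b c

lemma Reachable.step {N : ℕ} {x a b c x' a' b' c' : ℤ} (h : Reachable N x a b c) (m : ℕ)
    (hm : m < 6) (hE : E1 *ᵥ (R7ᵀ ^ m *ᵥ stateVec x a b c) = stateVec x' a' b' c') :
    Reachable (N + 1) x' a' b' c' := by
  obtain ⟨l, hl, hw, j, hj⟩ := h
  -- the digit exponent `i ≡ j - m (mod 6)` turns the current rotation `j` into `m`
  obtain ⟨d, hd, hd0, hA⟩ := exists_digit ((j + 5 * m) % 6) (Nat.mod_lt _ (by norm_num))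
  refine ⟨d :: l, ?_, ?_, (j + 5 * m) % 6, ?_⟩
  · intro d' hd'
    rcases List.mem_cons.1 hd' with rfl | h'
    · exact hd
    · exact hl d' h'
  · rw [eweight_cons hd0, hw]
  · have hmod : (5 * ((j + 5 * m) % 6) + j) % 6 = m := by omega
    rw [colVec_cons, hj, hA, rotE1_mulVec, hmod, hE]

lemma Reachable.step_two {N : ℕ} {x a b c : ℤ} (h : Reachable N x a b c) :
    Reachable (N + 1) (x + b) x (2 * x) x :=
  h.step 2 (by norm_num) (E1_mulVec x a b c).2.2.1

lemma Reachable.step_five {N : ℕ} {x a b c : ℤ} (h : Reachable N x a b c) :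
    Reachable (N + 1) x (x + a) (2 * x + a + b + c) (x + c) :=
  h.step 5 (by norm_num) (E1_mulVec x a b c).2.2.2.2.2

lemma reachable_extremal : ∀ N : ℕ, Reachable N (sseq N) (2 ^ N - sseq N)
    (2 * (2 ^ N - sseq N)) (2 ^ N - sseq N)
  | 0 => ⟨[], by simp, by simp [eweight], 0, by simp [colVec_nil, sseq]⟩
  | 1 => by
    have h := (reachable_extremal 0).step_two
    norm_num [sseq] at h ⊢
    exact h
  | 2 => by
    have h := (reachable_extremal 1).step_two
    norm_num [sseq] at h ⊢
    exact h
  | N + 3 => by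
    have h := (reachable_extremal N).step_two.step_five.step_two
    rw [sseq_add_three]
    convert h using 1 <;> push_cast <;> ring

/-- The maximum of `e A_{d_1} ⋯ A_{d_n} eᵀ` over all digit sequences from `D`
with exactly `N` nonzero terms is `s_N`. -/
theorem stmt17 (N : ℕ) :
    (∀ l : List ℂ, (∀ d ∈ l, d ∈ eD) → eweight l = N →
      (e7 * (l.map AmatE).prod * e7ᵀ) 0 0 ≤ (sseq N : ℤ)) ∧
    (∃ l : List ℂ, (∀ d ∈ l, d ∈ eD) ∧ eweight l = N ∧
      (e7 * (l.map AmatE).prod * e7ᵀ) 0 0 = (sseq N : ℤ)) := by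
  constructor
  · rintro l - rfl
    obtain ⟨j, x, a, b, c, h, hl⟩ := colVec_bounded l
    rw [product_eq_colVec, hl, R7T_pow_mulVec_zero]
    exact h.x_le
  · obtain ⟨l, hl, hw, j, hj⟩ := reachable_extremal N
    refine ⟨l, hl, hw, ?_⟩
    rw [product_eq_colVec, hj, R7T_pow_mulVec_zero]
    rfl
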